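/- arXiv:1903.05307 — 3 statements merged into one kernel-verified Lean document; each statement's English description precedes it below -/
import Mathlib

section
/- Let κ₁, κ₂ ≥ 0 and let ξ₁, ξ₂ : ℝ → ℂ be continuous. Suppose the sixteen matrix-valued functions ρ^{jk;mn} : ℝ → M₂(ℂ) (j, k, m, n ∈ {0,1}) are differentiable and satisfy the two-channel master-equation hierarchy on an interval [t₀, T], and suppose the initial data satisfy the adjoint relations (ρ^{jk;mn}(t₀))† = ρ^{kj;nm}(t₀) for all j, k, m, n ∈ {0,1}. Then (ρ^{jk;mn}(t))† = ρ^{kj;nm}(t) for all t ∈ [t₀, T] and all indices; in particular, ρ^{11;11}(t), ρ^{11;00}(t), ρ^{00;11}(t) and ρ^{00;00}(t) are Hermitian for all t ∈ [t₀, T]. -/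
/-!
The family `σ^{jk;mn}(t) = (ρ^{kj;nm}(t))†` solves the same hierarchy as `ρ`: since
`[A, B]† = [B†, A†]` and `σ₊ = σ₋†`, taking adjoints exchanges the `ξ` and `ξ*` terms of each
channel, and the dissipator commutes with the adjoint (`conjTranspose_hierarchyRHS`). By hypothesis
`σ` and `ρ` have the same initial values, so it suffices to prove uniqueness for the hierarchy.

Uniqueness goes by induction on `j + k + m + n`. The equation for `ρ^{jk;mn}` involves, besides
`ρ^{jk;mn}` itself, only functions with a smaller index sum. Once these agree, the difference of
two solutions satisfies the autonomous linear equation `d' = (κ₁ + κ₂) D*_{σ₋} d` with `d(t₀) = 0`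
and therefore vanishes (`eq_zero_of_linear_ode`). The pulses thus never enter a Lipschitz estimate.
-/

open Matrix MeasureTheory

attribute [local instance] Matrix.normedAddCommGroup Matrix.normedSpace

/-- The lowering operator `σ₋ = |g⟩⟨e|` (with `|g⟩` the first and `|e⟩` the second
basis vector). -/
noncomputable def sigmaMinus : Matrix (Fin 2) (Fin 2) ℂ := !![0, 1; 0, 0]

/-- The raising operator `σ₊ = σ₋†`. -/
noncomputable def sigmaPlus : Matrix (Fin 2) (Fin 2) ℂ := sigmaMinusᴴ

/-- The Lindblad dissipator `D*_L ρ = L ρ L† − ½(L†L ρ + ρ L†L)`. -/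
noncomputable def dissipator (L ρ : Matrix (Fin 2) (Fin 2) ℂ) : Matrix (Fin 2) (Fin 2) ℂ :=
  L * ρ * Lᴴ - (2 : ℂ)⁻¹ • (Lᴴ * L * ρ + ρ * (Lᴴ * L))

/-- The mComm `[A, B] = AB − BA`. -/
noncomputable def mComm (A B : Matrix (Fin 2) (Fin 2) ℂ) : Matrix (Fin 2) (Fin 2) ℂ :=
  A * B - B * A

/-- The right-hand side of the two-channel master-equation hierarchy at indices
`j, k, m, n ∈ {0, 1}`; terms whose index coefficient is `0` vanish. -/
noncomputable def hierarchyRHS (κ₁ κ₂ : ℝ) (ξ₁ ξ₂ : ℝ → ℂ)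
    (ρ : Fin 2 → Fin 2 → Fin 2 → Fin 2 → ℝ → Matrix (Fin 2) (Fin 2) ℂ)
    (j k m n : Fin 2) (t : ℝ) : Matrix (Fin 2) (Fin 2) ℂ :=
  ((κ₁ + κ₂ : ℝ) : ℂ) • dissipator sigmaMinus (ρ j k m n t)
  + ((j.val : ℂ) * (Real.sqrt κ₁ : ℂ) * ξ₁ t) • mComm (ρ (j - 1) k m n t) sigmaPlus
  + ((k.val : ℂ) * (Real.sqrt κ₁ : ℂ) * (starRingEnd ℂ) (ξ₁ t)) •
      mComm sigmaMinus (ρ j (k - 1) m n t)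
  + ((m.val : ℂ) * (Real.sqrt κ₂ : ℂ) * ξ₂ t) • mComm (ρ j k (m - 1) n t) sigmaPlus
  + ((n.val : ℂ) * (Real.sqrt κ₂ : ℂ) * (starRingEnd ℂ) (ξ₂ t)) •
      mComm sigmaMinus (ρ j k m (n - 1) t)

/-- The dissipator as a complex-linear map in `ρ`. -/
noncomputable def dissipatorLin (L : Matrix (Fin 2) (Fin 2) ℂ) :
    Matrix (Fin 2) (Fin 2) ℂ →ₗ[ℂ] Matrix (Fin 2) (Fin 2) ℂ where
  toFun := dissipator L
  map_add' x y := by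
    simp only [dissipator, mul_add, add_mul, smul_add]; abel
  map_smul' c x := by
    simp only [dissipator, mul_smul_comm, smul_mul_assoc, RingHom.id_apply, smul_sub, smul_add,
      smul_comm c (2 : ℂ)⁻¹]

lemma conjTranspose_dissipator (L x : Matrix (Fin 2) (Fin 2) ℂ) :
    (dissipator L x)ᴴ = dissipator L xᴴ := by
  simp only [dissipator, conjTranspose_sub, conjTranspose_add, conjTranspose_smul,
    conjTranspose_mul, conjTranspose_conjTranspose, mul_assoc]
  rw [add_comm (xᴴ * _)]
  simp

lemma conjTranspose_mComm (A B : Matrix (Fin 2) (Fin 2) ℂ) :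
    (mComm A B)ᴴ = mComm Bᴴ Aᴴ := by
  simp [mComm, conjTranspose_mul]

/-- The hierarchy is invariant under `ρ^{jk;mn} ↦ (ρ^{kj;nm})†`. -/
lemma conjTranspose_hierarchyRHS (κ₁ κ₂ : ℝ) (ξ₁ ξ₂ : ℝ → ℂ)
    (ρ : Fin 2 → Fin 2 → Fin 2 → Fin 2 → ℝ → Matrix (Fin 2) (Fin 2) ℂ)
    (j k m n : Fin 2) (t : ℝ) :
    (hierarchyRHS κ₁ κ₂ ξ₁ ξ₂ ρ k j n m t)ᴴ =
      hierarchyRHS κ₁ κ₂ ξ₁ ξ₂ (fun j k m n t => (ρ k j n m t)ᴴ) j k m n t := by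
  simp only [hierarchyRHS, conjTranspose_add, conjTranspose_smul, conjTranspose_dissipator,
    conjTranspose_mComm, sigmaPlus, conjTranspose_conjTranspose, star_mul', RCLike.star_def,
    Complex.conj_ofReal, Complex.conj_conj, map_natCast]
  abel

lemma eq_zero_of_linear_ode {E : Type*} [NormedAddCommGroup E] [NormedSpace ℝ E]
    (A : E →L[ℝ] E) {t₀ T : ℝ} {d : ℝ → E}
    (hd : ∀ t ∈ Set.Icc t₀ T, HasDerivWithinAt d (A (d t)) (Set.Icc t₀ T) t) (h₀ : d t₀ = 0) :
    ∀ t ∈ Set.Icc t₀ T, d t = 0 := by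
  refine ODE_solution_unique (v := fun _ => A) (K := ‖A‖₊) (fun _ => A.lipschitz)
    (fun t ht => (hd t ht).continuousWithinAt)
    (fun t ht => (hd t (Set.Ico_subset_Icc_self ht)).mono_of_mem_nhdsWithin
      (Icc_mem_nhdsGE_of_mem ht))
    (g := fun _ => 0) continuousOn_const (fun t _ => ?_) h₀
  simpa using hasDerivWithinAt_const t (Set.Ici t) (0 : E)

/-- Solutions of the hierarchy are determined by their initial values. -/
lemma hierarchy_unique (κ₁ κ₂ : ℝ) (ξ₁ ξ₂ : ℝ → ℂ) (t₀ T : ℝ)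
    (ρ σ : Fin 2 → Fin 2 → Fin 2 → Fin 2 → ℝ → Matrix (Fin 2) (Fin 2) ℂ)
    (hρ : ∀ j k m n : Fin 2, ∀ t ∈ Set.Icc t₀ T,
      HasDerivWithinAt (ρ j k m n) (hierarchyRHS κ₁ κ₂ ξ₁ ξ₂ ρ j k m n t) (Set.Icc t₀ T) t)
    (hσ : ∀ j k m n : Fin 2, ∀ t ∈ Set.Icc t₀ T,
      HasDerivWithinAt (σ j k m n) (hierarchyRHS κ₁ κ₂ ξ₁ ξ₂ σ j k m n t) (Set.Icc t₀ T) t)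
    (hinit : ∀ j k m n : Fin 2, ρ j k m n t₀ = σ j k m n t₀) (j k m n : Fin 2) :
    ∀ t ∈ Set.Icc t₀ T, ρ j k m n t = σ j k m n t := by
  induction hs : j.val + k.val + m.val + n.val using Nat.strong_induction_on
    generalizing j k m n with
  | _ s ih =>
  subst hs
  -- `Fin 2` subtraction wraps around at `0`, but there the coefficient vanishes.
  have pred_val (i : Fin 2) : i.val = 0 ∨ (i - 1).val < i.val := by
    fin_cases i <;> simp
  let A := (((κ₁ + κ₂ : ℝ) : ℂ) • dissipatorLin sigmaMinus).toContinuousLinearMap.restrictScalars ℝ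
  have key := eq_zero_of_linear_ode A (t₀ := t₀) (T := T)
    (d := fun t => ρ j k m n t - σ j k m n t) (fun t ht => ?_) (sub_eq_zero.2 (hinit j k m n))
  · exact fun t ht => sub_eq_zero.1 (key t ht)
  · refine ((hρ j k m n t ht).sub (hσ j k m n t ht)).congr_deriv ?_
    have hA : A (ρ j k m n t - σ j k m n t) =
        ((κ₁ + κ₂ : ℝ) : ℂ) • dissipator sigmaMinus (ρ j k m n t) -
          ((κ₁ + κ₂ : ℝ) : ℂ) • dissipator sigmaMinus (σ j k m n t) := map_sub A _ _
    refine Eq.trans ?_ hA.symm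
    have hj : j.val = 0 ∨ ρ (j - 1) k m n t = σ (j - 1) k m n t :=
      (pred_val j).imp_right fun h => ih _ (by omega) _ _ _ _ rfl t ht
    have hk : k.val = 0 ∨ ρ j (k - 1) m n t = σ j (k - 1) m n t :=
      (pred_val k).imp_right fun h => ih _ (by omega) _ _ _ _ rfl t ht
    have hm : m.val = 0 ∨ ρ j k (m - 1) n t = σ j k (m - 1) n t :=
      (pred_val m).imp_right fun h => ih _ (by omega) _ _ _ _ rfl t ht
    have hn : n.val = 0 ∨ ρ j k m (n - 1) t = σ j k m (n - 1) t :=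
      (pred_val n).imp_right fun h => ih _ (by omega) _ _ _ _ rfl t ht
    have coeff_congr (i : Fin 2) (a b : ℂ) (x y : Matrix (Fin 2) (Fin 2) ℂ)
        (f : Matrix (Fin 2) (Fin 2) ℂ → Matrix (Fin 2) (Fin 2) ℂ) (h : i.val = 0 ∨ x = y) :
        ((i.val : ℂ) * a * b) • f x = ((i.val : ℂ) * a * b) • f y := by
      rcases h with h | h <;> simp [h]
    unfold hierarchyRHS
    rw [coeff_congr j _ _ _ _ (mComm · sigmaPlus) hj, coeff_congr k _ _ _ _ (mComm sigmaMinus) hk,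
      coeff_congr m _ _ _ _ (mComm · sigmaPlus) hm, coeff_congr n _ _ _ _ (mComm sigmaMinus) hn]
    abel

/-- If the sixteen matrix-valued functions `ρ^{jk;mn}` solve the two-channel
master-equation hierarchy on `[t₀, T]` and the initial data satisfy the adjoint
relations `(ρ^{jk;mn}(t₀))† = ρ^{kj;nm}(t₀)`, then `(ρ^{jk;mn}(t))† = ρ^{kj;nm}(t)`
for all `t ∈ [t₀, T]`; in particular `ρ^{11;11}`, `ρ^{11;00}`, `ρ^{00;11}` and
`ρ^{00;00}` are Hermitian on `[t₀, T]`. -/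
theorem hierarchy_adjoint_relations (κ₁ κ₂ : ℝ) (hκ₁ : 0 ≤ κ₁) (hκ₂ : 0 ≤ κ₂)
    (ξ₁ ξ₂ : ℝ → ℂ) (hξ₁ : Continuous ξ₁) (hξ₂ : Continuous ξ₂)
    (t₀ T : ℝ) (hT : t₀ ≤ T)
    (ρ : Fin 2 → Fin 2 → Fin 2 → Fin 2 → ℝ → Matrix (Fin 2) (Fin 2) ℂ)
    (hode : ∀ j k m n : Fin 2, ∀ t ∈ Set.Icc t₀ T,
      HasDerivWithinAt (ρ j k m n) (hierarchyRHS κ₁ κ₂ ξ₁ ξ₂ ρ j k m n t) (Set.Icc t₀ T) t)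
    (hinit : ∀ j k m n : Fin 2, (ρ j k m n t₀)ᴴ = ρ k j n m t₀) :
    (∀ j k m n : Fin 2, ∀ t ∈ Set.Icc t₀ T, (ρ j k m n t)ᴴ = ρ k j n m t) ∧
    (∀ t ∈ Set.Icc t₀ T, (ρ 1 1 1 1 t).IsHermitian ∧ (ρ 1 1 0 0 t).IsHermitian ∧
      (ρ 0 0 1 1 t).IsHermitian ∧ (ρ 0 0 0 0 t).IsHermitian) := by
  have main : ∀ j k m n : Fin 2, ∀ t ∈ Set.Icc t₀ T, (ρ j k m n t)ᴴ = ρ k j n m t := by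
    intro j k m n
    refine hierarchy_unique κ₁ κ₂ ξ₁ ξ₂ t₀ T (fun j k m n t => (ρ k j n m t)ᴴ) ρ
      (fun j k m n t ht => ?_) hode (fun j k m n => hinit k j n m) k j n m
    rw [← conjTranspose_hierarchyRHS]
    exact (hode k j n m t ht).star
  exact ⟨main, fun t ht => ⟨main 1 1 1 1 t ht, main 1 1 0 0 t ht, main 0 0 1 1 t ht,
    main 0 0 0 0 t ht⟩⟩
end

section
/- Let κ₁, κ₂ ≥ 0 and let ξ₁, ξ₂ : ℝ → ℂ be continuous. Suppose the sixteen matrix-valued functions ρ^{jk;mn} : ℝ → M₂(ℂ) (j, k, m, n ∈ {0,1}) are differentiable and satisfy the two-channel master-equation hierarchy on an interval [t₀, T]. Then for every choice of indices j, k, m, n the trace Tr[ρ^{jk;mn}(t)] is constant in t on [t₀, T]. In particular, if Tr[ρ^{11;11}(t₀)] = 1, then Tr[ρ^{11;11}(t)] = 1 for all t ∈ [t₀, T], so the hierarchy is trace preserving. -/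
/-!
By cyclicity of the trace, commutators are traceless, and so is the dissipator, since
`Tr (L ρ L†) = Tr (L†L ρ) = Tr (ρ L†L)`. Hence the right-hand side of the hierarchy is traceless
(`trace_hierarchyRHS`). The trace is a continuous linear map, so each `Tr ρ^{jk;mn}` has zero
derivative on `[t₀, T]` and is therefore constant there.
-/

open Matrix MeasureTheory

attribute [local instance] Matrix.normedAddCommGroup Matrix.normedSpace

lemma trace_mComm (A B : Matrix (Fin 2) (Fin 2) ℂ) : (mComm A B).trace = 0 := by
  rw [mComm, trace_sub, trace_mul_comm, sub_self]

lemma trace_dissipator (L ρ : Matrix (Fin 2) (Fin 2) ℂ) : (dissipator L ρ).trace = 0 := by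
  have h : (L * ρ * Lᴴ).trace = (Lᴴ * L * ρ).trace := by
    rw [trace_mul_comm, Matrix.mul_assoc]
  rw [dissipator, trace_sub, trace_smul, trace_add, trace_mul_comm ρ, h, smul_eq_mul]
  ring

lemma trace_hierarchyRHS (κ₁ κ₂ : ℝ) (ξ₁ ξ₂ : ℝ → ℂ)
    (ρ : Fin 2 → Fin 2 → Fin 2 → Fin 2 → ℝ → Matrix (Fin 2) (Fin 2) ℂ)
    (j k m n : Fin 2) (t : ℝ) : (hierarchyRHS κ₁ κ₂ ξ₁ ξ₂ ρ j k m n t).trace = 0 := by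
  simp only [hierarchyRHS, trace_add, trace_smul, trace_mComm, trace_dissipator, smul_zero,
    add_zero]

/-- If the sixteen matrix-valued functions `ρ^{jk;mn}` solve the two-channel
master-equation hierarchy on `[t₀, T]`, then every trace `Tr[ρ^{jk;mn}(t)]` is
constant in `t` on `[t₀, T]`; in particular, if `Tr[ρ^{11;11}(t₀)] = 1` then
`Tr[ρ^{11;11}(t)] = 1` for all `t ∈ [t₀, T]`, so the hierarchy is trace preserving. -/
theorem hierarchy_trace_preserving (κ₁ κ₂ : ℝ) (hκ₁ : 0 ≤ κ₁) (hκ₂ : 0 ≤ κ₂)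
    (ξ₁ ξ₂ : ℝ → ℂ) (hξ₁ : Continuous ξ₁) (hξ₂ : Continuous ξ₂)
    (t₀ T : ℝ) (hT : t₀ ≤ T)
    (ρ : Fin 2 → Fin 2 → Fin 2 → Fin 2 → ℝ → Matrix (Fin 2) (Fin 2) ℂ)
    (hode : ∀ j k m n : Fin 2, ∀ t ∈ Set.Icc t₀ T,
      HasDerivWithinAt (ρ j k m n) (hierarchyRHS κ₁ κ₂ ξ₁ ξ₂ ρ j k m n t) (Set.Icc t₀ T) t) :
    (∀ j k m n : Fin 2, ∀ t ∈ Set.Icc t₀ T, (ρ j k m n t).trace = (ρ j k m n t₀).trace) ∧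
    ((ρ 1 1 1 1 t₀).trace = 1 → ∀ t ∈ Set.Icc t₀ T, (ρ 1 1 1 1 t).trace = 1) := by
  have key : ∀ j k m n : Fin 2, ∀ t ∈ Set.Icc t₀ T,
      (ρ j k m n t).trace = (ρ j k m n t₀).trace := by
    intro j k m n
    have hderiv : ∀ t ∈ Set.Icc t₀ T,
        HasDerivWithinAt (fun s => (ρ j k m n s).trace) 0 (Set.Icc t₀ T) t := by
      intro t ht
      -- the trace is taken over `ℝ`, the field over which `ρ` is differentiated
      have h := (LinearMap.toContinuousLinearMap
        (Matrix.traceLinearMap (Fin 2) ℝ ℂ)).hasFDerivAt.comp_hasDerivWithinAt t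
          (hode j k m n t ht)
      rw [← trace_hierarchyRHS κ₁ κ₂ ξ₁ ξ₂ ρ j k m n t]
      exact h
    refine constant_of_has_deriv_right_zero (fun t ht => (hderiv t ht).continuousWithinAt) ?_
    intro t ht
    exact (hderiv t ⟨ht.1, ht.2.le⟩).mono_of_mem_nhdsWithin (Icc_mem_nhdsGE_of_mem ht)
  exact ⟨key, fun h t ht => (key 1 1 1 1 t ht).trans h⟩
end

section
/- Let κ > 0, γ > 0, and let ξ be the rising exponential pulse with parameter γ. Define, for t ≤ 0, c(t) = (2√(κγ)/(γ+κ)) e^{γt/2} and P(t) = (4κγ/(γ+κ)²) e^{γt}, and define the matrix-valued functions ρ^{00}(t) = |g⟩⟨g|, ρ^{10}(t) = c(t)·|e⟩⟨g|, ρ^{01}(t) = (ρ^{10}(t))† = c(t)·|g⟩⟨e|, and ρ^{11}(t) = (1 − P(t))·|g⟩⟨g| + P(t)·|e⟩⟨e|. Then these functions satisfy the single-photon master equation with coupling κ and pulse ξ at every t < 0; consequently the excitation probability of the atom is P_e(t) = Tr[ρ^{11}(t)|e⟩⟨e|] = (4κγ/(γ+κ)²) e^{γt} for t ≤ 0, P_e(t)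 → 0 as t → −∞, and P_e(0) = 4κγ/(γ+κ)². -/
/-!
Entrywise, the master equation is triangular in the photon indices. The state `|g⟩⟨g|` is
annihilated by the dissipator, and the remaining components reduce to the scalar equations
`c' = -(κ/2) c - √κ ξ` and `P' = -κ P - 2 √κ ξ c`. For `ξ = -√γ e^{γt/2}` an exponential ansatz
solves both: the amplitude satisfies `(γ + κ)/2 · c = √(κγ) e^{γt/2}` and
`(γ + κ) P = 2 √(κγ) e^{γt/2} c`, which are the two algebraic identities checked in
`amplitude_hasDerivAt` and `population_hasDerivAt`.
-/

open Matrix MeasureTheory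

attribute [local instance] Matrix.normedAddCommGroup Matrix.normedSpace

/-- The right-hand side of the single-photon master equation with coupling `κ`
and pulse `ξ`, at indices `j, k ∈ {0, 1}`. -/
noncomputable def singleRHS (κ : ℝ) (ξ : ℝ → ℂ)
    (σ : Fin 2 → Fin 2 → ℝ → Matrix (Fin 2) (Fin 2) ℂ)
    (j k : Fin 2) (t : ℝ) : Matrix (Fin 2) (Fin 2) ℂ :=
  (κ : ℂ) • dissipator sigmaMinus (σ j k t)
  + ((j.val : ℂ) * (Real.sqrt κ : ℂ) * ξ t) • mComm (σ (j - 1) k t) sigmaPlus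
  + ((k.val : ℂ) * (Real.sqrt κ : ℂ) * (starRingEnd ℂ) (ξ t)) •
      mComm sigmaMinus (σ j (k - 1) t)

/-- The matrix unit `|g⟩⟨g|`. -/
noncomputable def ggMat : Matrix (Fin 2) (Fin 2) ℂ := !![1, 0; 0, 0]
/-- The matrix unit `|e⟩⟨e|`. -/
noncomputable def eeMat : Matrix (Fin 2) (Fin 2) ℂ := !![0, 0; 0, 1]
/-- The matrix unit `|e⟩⟨g|`. -/
noncomputable def egMat : Matrix (Fin 2) (Fin 2) ℂ := !![0, 0; 1, 0]
/-- The matrix unit `|g⟩⟨e|`. -/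
noncomputable def geMat : Matrix (Fin 2) (Fin 2) ℂ := !![0, 1; 0, 0]

lemma sigmaPlus_eq : sigmaPlus = !![0, 0; 1, 0] := by
  ext a b
  fin_cases a <;> fin_cases b <;> simp [sigmaPlus, sigmaMinus]

/-- Entrywise decay: population moves from `|e⟩` to `|g⟩`, coherences decay at half the rate. -/
lemma dissipator_sigmaMinus (A : Matrix (Fin 2) (Fin 2) ℂ) :
    dissipator sigmaMinus A = !![A 1 1, -(A 0 1 / 2); -(A 1 0 / 2), -A 1 1] := by
  have h : sigmaMinusᴴ = !![0, 0; 1, 0] := sigmaPlus_eq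
  rw [dissipator, h, sigmaMinus]
  ext a b
  fin_cases a <;> fin_cases b <;>
    simp [Matrix.mul_apply, Matrix.vecMul, dotProduct, Fin.sum_univ_two] <;> ring

lemma mComm_sigmaPlus (A : Matrix (Fin 2) (Fin 2) ℂ) :
    mComm A sigmaPlus = !![A 0 1, 0; A 1 1 - A 0 0, -A 0 1] := by
  rw [mComm, sigmaPlus_eq]
  ext a b
  fin_cases a <;> fin_cases b <;>
    simp [Matrix.mul_apply, Matrix.vecMul, dotProduct, Fin.sum_univ_two]

lemma mComm_sigmaMinus (A : Matrix (Fin 2) (Fin 2) ℂ) :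
    mComm sigmaMinus A = !![A 1 0, A 1 1 - A 0 0; 0, -A 1 0] := by
  rw [mComm, sigmaMinus]
  ext a b
  fin_cases a <;> fin_cases b <;>
    simp [Matrix.mul_apply, Matrix.vecMul, dotProduct, Fin.sum_univ_two]

/-- The amplitude equation `c' = -(κ/2) c - √κ ξ` for `ξ = -√γ e^{γt/2}`. -/
lemma amplitude_hasDerivAt {κ γ : ℝ} (hκ : 0 < κ) (hγ : 0 < γ) {c : ℝ → ℝ}
    (hc : ∀ t : ℝ, c t = 2 * Real.sqrt (κ * γ) / (γ + κ) * Real.exp (γ * t / 2)) (t : ℝ) :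
    HasDerivAt c (-(κ / 2) * c t - Real.sqrt κ * (-Real.sqrt γ * Real.exp (γ * t / 2))) t := by
  have hlin : HasDerivAt (fun s : ℝ => γ * s / 2) (γ / 2) t := by
    simpa using ((hasDerivAt_id t).const_mul γ).div_const 2
  have h := hlin.exp.const_mul (2 * Real.sqrt (κ * γ) / (γ + κ))
  rw [← funext hc] at h
  refine h.congr_deriv ?_
  rw [hc, Real.sqrt_mul hκ.le]
  have : γ + κ ≠ 0 := by positivity
  field_simp
  ring

/-- The population equation `P' = -κ P - 2 √κ ξ c` for `ξ = -√γ e^{γt/2}`. -/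
lemma population_hasDerivAt {κ γ : ℝ} (hκ : 0 < κ) (hγ : 0 < γ) {c P : ℝ → ℝ}
    (hc : ∀ t : ℝ, c t = 2 * Real.sqrt (κ * γ) / (γ + κ) * Real.exp (γ * t / 2))
    (hP : ∀ t : ℝ, P t = 4 * κ * γ / (γ + κ) ^ 2 * Real.exp (γ * t)) (t : ℝ) :
    HasDerivAt P
      (-κ * P t - 2 * (Real.sqrt κ * (-Real.sqrt γ * Real.exp (γ * t / 2))) * c t) t := by
  have hlin : HasDerivAt (fun s : ℝ => γ * s) γ t := by
    simpa using (hasDerivAt_id t).const_mul γ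
  have h := hlin.exp.const_mul (4 * κ * γ / (γ + κ) ^ 2)
  rw [← funext hP] at h
  refine h.congr_deriv ?_
  have hexp : Real.exp (γ * t) = Real.exp (γ * t / 2) ^ 2 := by
    rw [← Real.exp_nat_mul]; congr 1; push_cast; ring
  have hsκ := Real.sq_sqrt hκ.le
  have hsγ := Real.sq_sqrt hγ.le
  rw [hP, hc, Real.sqrt_mul hκ.le, hexp]
  have : γ + κ ≠ 0 := by positivity
  generalize Real.exp (γ * t / 2) = E
  generalize Real.sqrt κ = a at *
  generalize Real.sqrt γ = b at *
  subst hsκ hsγ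
  field_simp
  ring

/-- For a two-level atom (decay rate `κ > 0`) driven by a single photon with the
rising exponential pulse of parameter `γ > 0`, the explicit functions
`ρ^{00}(t) = |g⟩⟨g|`, `ρ^{10}(t) = c(t)|e⟩⟨g|`, `ρ^{01}(t) = c(t)|g⟩⟨e|`,
`ρ^{11}(t) = (1 − P(t))|g⟩⟨g| + P(t)|e⟩⟨e|`, with
`c(t) = (2√(κγ)/(γ+κ)) e^{γt/2}` and `P(t) = (4κγ/(γ+κ)²) e^{γt}`,
solve the single-photon master equation at every `t < 0`; consequently the
excitation probability is `P_e(t) = Tr[ρ^{11}(t)|e⟩⟨e|] = (4κγ/(γ+κ)²) e^{γt}`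
for `t ≤ 0`, `P_e(t) → 0` as `t → −∞`, and `P_e(0) = 4κγ/(γ+κ)²`. -/
theorem risingExponential_explicit_solution (κ γ : ℝ) (hκ : 0 < κ) (hγ : 0 < γ)
    (ξ : ℝ → ℂ)
    (hξ : ∀ t : ℝ, ξ t = if t ≤ 0 then (-Real.sqrt γ * Real.exp (γ * t / 2) : ℝ) else 0)
    (c P : ℝ → ℝ)
    (hc : ∀ t : ℝ, c t = 2 * Real.sqrt (κ * γ) / (γ + κ) * Real.exp (γ * t / 2))
    (hP : ∀ t : ℝ, P t = 4 * κ * γ / (γ + κ) ^ 2 * Real.exp (γ * t))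
    (ρ : Fin 2 → Fin 2 → ℝ → Matrix (Fin 2) (Fin 2) ℂ)
    (hρ00 : ∀ t : ℝ, ρ 0 0 t = ggMat)
    (hρ10 : ∀ t : ℝ, ρ 1 0 t = (c t : ℂ) • egMat)
    (hρ01 : ∀ t : ℝ, ρ 0 1 t = (c t : ℂ) • geMat)
    (hρ11 : ∀ t : ℝ, ρ 1 1 t = ((1 - P t : ℝ) : ℂ) • ggMat + ((P t : ℝ) : ℂ) • eeMat) :
    (∀ t : ℝ, t < 0 → ∀ j k : Fin 2, HasDerivAt (ρ j k) (singleRHS κ ξ ρ j k t) t) ∧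
    (∀ t : ℝ, t ≤ 0 → (ρ 1 1 t * eeMat).trace = ((P t : ℝ) : ℂ) ∧
      P t = 4 * κ * γ / (γ + κ) ^ 2 * Real.exp (γ * t)) ∧
    Filter.Tendsto P Filter.atBot (nhds 0) ∧
    P 0 = 4 * κ * γ / (γ + κ) ^ 2 := by
  have hlim : Filter.Tendsto P Filter.atBot (nhds 0) := by
    have h := (Real.tendsto_exp_atBot.comp
      (Filter.tendsto_id.const_mul_atBot hγ)).const_mul (4 * κ * γ / (γ + κ) ^ 2)
    rw [mul_zero] at h
    exact h.congr fun t => (hP t).symm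
  refine ⟨fun t ht => ?_, fun t _ => ⟨?_, hP t⟩, hlim, by simp [hP]⟩
  · have hcd := (amplitude_hasDerivAt hκ hγ hc t).ofReal_comp
    have hPd := population_hasDerivAt hκ hγ hc hP t
    have hPc := hPd.ofReal_comp
    have hQc := (hPd.const_sub 1).ofReal_comp
    have hξt := hξ t
    rw [if_pos ht.le] at hξt
    -- Only the scalar equations know the shape of the pulse; from here on the value `ξ t` may be
    -- any real number `x`.
    generalize -Real.sqrt γ * Real.exp (γ * t / 2) = x at hcd hPd hPc hQc hξt
    intro j k
    fin_cases j <;> fin_cases k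
    · have hf : ρ 0 0 = fun _ => ggMat := funext hρ00
      have h := hasDerivAt_const (𝕜 := ℝ) t ggMat
      rw [← hf] at h
      refine h.congr_deriv ?_
      ext a b
      fin_cases a <;> fin_cases b <;>
        simp [singleRHS, dissipator_sigmaMinus, hρ00, ggMat]
    · have hf : ρ 0 1 = fun s => (c s : ℂ) • geMat := funext hρ01
      have h := hcd.smul_const geMat
      rw [← hf] at h
      refine h.congr_deriv ?_
      ext a b
      fin_cases a <;> fin_cases b <;>
        simp [singleRHS, dissipator_sigmaMinus, mComm_sigmaPlus, mComm_sigmaMinus, hρ00, hρ01, hξt,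
          ggMat, geMat]
      all_goals ring
    · have hf : ρ 1 0 = fun s => (c s : ℂ) • egMat := funext hρ10
      have h := hcd.smul_const egMat
      rw [← hf] at h
      refine h.congr_deriv ?_
      ext a b
      fin_cases a <;> fin_cases b <;>
        simp [singleRHS, dissipator_sigmaMinus, mComm_sigmaPlus, mComm_sigmaMinus, hρ00, hρ10, hξt,
          ggMat, egMat]
      all_goals ring
    · have h := (hQc.smul_const ggMat).add (hPc.smul_const eeMat)
      refine (h.congr_deriv ?_).congr_of_eventuallyEq (Filter.Eventually.of_forall hρ11)
      ext a b
      fin_cases a <;> fin_cases b <;>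
        simp [singleRHS, dissipator_sigmaMinus, mComm_sigmaPlus, mComm_sigmaMinus, hρ01,
          hρ10, hρ11, hξt, ggMat, egMat, geMat, eeMat]
      all_goals ring
  · simp [hρ11, ggMat, eeMat, Matrix.trace_fin_two]
end
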